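/- The sequence {n! V_n}_{n≥0} is strictly log-convex; that is, for every integer n ≥ 1, n·V_n^2 < (n+1)·V_{n−1}·V_{n+1}. -/

import Mathlib

/-!
The inequality is a quadratic condition on the ratio `r = V_n / V_{n-1}`: after eliminating
`V_{n+1}` by the recurrence, it says that `r` lies strictly between two roots. The condition holds
at `r = 16`, the limit of the ratios, with a margin that allows `r` to exceed `16` by about `32 / n`.

The recurrence reads `r_{n+1} = a_n - b_n / r_n` with `b_n ≥ 0`. It maps `16` to
`16 + 8 / ((n+1)^2 n)` and contracts the excess `r_n - 16` by a factor of about `1/2`, so the bounds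
`16 ≤ r_n ≤ 16 + 8 / n` propagate by induction from `r_2 = 18` (`ratio_step`), and
`log_convex_of_ratio` deduces the inequality from them. The case `n = 1` is a computation.

Throughout, `x, y, z` are three consecutive terms `V_{n-1}, V_n, V_{n+1}` and `s = n ≥ 2`, with the
ratio bounds written as `16 x ≤ y` and `s y ≤ (16 s + 8) x`.
-/

/-- The bounds `16 ≤ r_s ≤ 16 + 8 / s` on the ratio of consecutive terms carry over to `s + 1`. -/
theorem ratio_step {s x y z : ℝ} (hs : 2 ≤ s) (hx : 0 < x) (hlo : 16 * x ≤ y)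
    (hhi : s * y ≤ (16 * s + 8) * x)
    (h : s * (s + 1) ^ 2 * z =
      8 * s * (3 * (s + 1) ^ 2 - (s + 1) - 1) * y - 128 * (s - 1) * (s + 1) ^ 2 * x) :
    16 * y ≤ z ∧ (s + 1) * z ≤ (16 * (s + 1) + 8) * y := by
  have hy : 0 < y := by linarith
  have hD : 0 < s * (s + 1) ^ 2 := by positivity
  constructor
  · refine le_of_mul_le_mul_left ?_ hD
    have h1 : 0 ≤ 8 * (s - 1) * (s + 1) ^ 2 * (y - 16 * x) :=
      mul_nonneg (mul_nonneg (by linarith) (by positivity)) (by linarith)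
    nlinarith
  · have hE : 0 < s * (s + 1) ^ 2 * (16 * s + 8) := by positivity
    refine le_of_mul_le_mul_left ?_ hE
    have h1 : 0 ≤ 128 * (s - 1) * (s + 1) ^ 3 * ((16 * s + 8) * x - s * y) :=
      mul_nonneg (mul_nonneg (by linarith) (by positivity)) (by linarith)
    have e : s * (s + 1) ^ 2 * (16 * s + 8) * ((s + 1) * z) =
        (16 * s + 8) * (s + 1) * (s * (s + 1) ^ 2 * z) := by ring
    rw [e, h]
    obtain ⟨u, rfl⟩ : ∃ u, s = u + 2 := ⟨s - 2, by ring⟩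
    have hu : 0 ≤ u := by linarith
    -- With `x` replaced by its lower bound `s y / (16 s + 8)`, the slack is `y` times a polynomial
    -- whose coefficients in `u = s - 2` are all nonnegative.
    have h2 : 0 ≤ y * (64 * u ^ 4 + 704 * u ^ 3 + 2816 * u ^ 2 + 4864 * u ^ 1 + 3072) := by positivity
    linarith

/-- The ratio bounds at `s` imply the log-convexity inequality at `s`. -/
theorem log_convex_of_ratio {s x y z : ℝ} (hs : 2 ≤ s) (hx : 0 < x) (hlo : 16 * x ≤ y)
    (hhi : s * y ≤ (16 * s + 8) * x)
    (h : s * (s + 1) ^ 2 * z =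
      8 * s * (3 * (s + 1) ^ 2 - (s + 1) - 1) * y - 128 * (s - 1) * (s + 1) ^ 2 * x) :
    s * y ^ 2 < (s + 1) * x * z := by
  -- The excess `w = y - 16 x` satisfies `0 ≤ s w ≤ 8 x`.
  obtain ⟨w, rfl⟩ : ∃ w, y = 16 * x + w := ⟨y - 16 * x, by ring⟩
  have hw : 0 ≤ w := by linarith
  have hw' : 0 ≤ 8 * x - s * w := by linarith
  have hD : 0 < s * (s + 1) := by positivity
  refine lt_of_mul_lt_mul_left ?_ hD.le
  have e : s * (s + 1) * ((s + 1) * x * z) = x * (s * (s + 1) ^ 2 * z) := by ring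
  rw [e, h]
  -- `s² (s + 1) w² ≤ 8 s (s + 1) x w` makes the difference of the two sides linear in `w`, with
  -- negative coefficient `-8 s³ x`; then `s w ≤ 8 x` leaves `x² (128 (2 s² + 2 s + 1) - 64 s²) > 0`.
  have h1 : 0 ≤ s * (s + 1) * w * (8 * x - s * w) := by positivity
  have h2 : 0 ≤ 8 * s ^ 2 * x * (8 * x - s * w) := by positivity
  have h3 : 0 < x ^ 2 * (192 * s ^ 2 + 256 * s + 128) := by positivity
  linarith

/-- The sequence `{n! V_n}_{n ≥ 0}` is strictly log-convex, i.e.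
`n V_n^2 < (n+1) V_{n-1} V_{n+1}` for `n ≥ 1`. -/
theorem stmt_4 (V : ℕ → ℝ) (hV0 : V 0 = 1) (hV1 : V 1 = 8)
    (hrec : ∀ n : ℕ, 2 ≤ n →
      ((n : ℝ) - 1) * (n : ℝ) ^ 2 * V n =
        8 * ((n : ℝ) - 1) * (3 * (n : ℝ) ^ 2 - (n : ℝ) - 1) * V (n - 1)
          - 128 * ((n : ℝ) - 2) * (n : ℝ) ^ 2 * V (n - 2)) :
    ∀ n : ℕ, 1 ≤ n →
      (n : ℝ) * V n ^ 2 < ((n : ℝ) + 1) * V (n - 1) * V (n + 1) := by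
  have rec' : ∀ k : ℕ, ((k : ℝ) + 2) * ((k : ℝ) + 2 + 1) ^ 2 * V (k + 3) =
      8 * ((k : ℝ) + 2) * (3 * ((k : ℝ) + 2 + 1) ^ 2 - ((k : ℝ) + 2 + 1) - 1) * V (k + 2)
        - 128 * ((k : ℝ) + 2 - 1) * ((k : ℝ) + 2 + 1) ^ 2 * V (k + 1) := by
    intro k
    have h := hrec (k + 3) (by omega)
    rw [show k + 3 - 1 = k + 2 by omega, show k + 3 - 2 = k + 1 by omega] at h
    push_cast at h
    linear_combination h
  have hV2 : V 2 = 144 := by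
    have h := hrec 2 le_rfl
    norm_num [hV0, hV1] at h
    linarith
  have key : ∀ k : ℕ, 0 < V (k + 1) ∧ 16 * V (k + 1) ≤ V (k + 2) ∧
      ((k : ℝ) + 2) * V (k + 2) ≤ (16 * ((k : ℝ) + 2) + 8) * V (k + 1) := by
    intro k
    induction k with
    | zero => norm_num [hV1, hV2]
    | succ k ih =>
      obtain ⟨hx, hlo, hhi⟩ := ih
      have hs : (2 : ℝ) ≤ (k : ℝ) + 2 := by linarith [k.cast_nonneg (α := ℝ)]
      obtain ⟨h1, h2⟩ := ratio_step hs hx hlo hhi (rec' k)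
      refine ⟨by rw [show k + 1 + 1 = k + 2 by omega]; linarith, h1, ?_⟩
      push_cast
      rw [show (k : ℝ) + 1 + 2 = k + 2 + 1 by ring]
      exact h2
  intro n hn
  obtain rfl | ⟨k, rfl⟩ : n = 1 ∨ ∃ k, n = k + 2 := by
    rcases Nat.lt_or_ge n 2 with h | h
    · exact Or.inl (by omega)
    · exact Or.inr ⟨n - 2, by omega⟩
  · norm_num [hV0, hV1, hV2]
  · obtain ⟨hx, hlo, hhi⟩ := key k
    have hs : (2 : ℝ) ≤ (k : ℝ) + 2 := by linarith [k.cast_nonneg (α := ℝ)]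
    have h := log_convex_of_ratio hs hx hlo hhi (rec' k)
    push_cast
    exact h
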